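/- arXiv:math/0212290 — 5 statements merged into one kernel-verified Lean document; each statement's English description precedes it below -/
import Mathlib

section
/- Let z, y ∈ k^× with y^3 = z. Then the H_k-module M_3(z,y) has exactly one H_k-submodule D other than 0 and M_3(z,y); D is one-dimensional and on D the element T acts by the scalar y and S_1 acts by 0 (so D is isomorphic to the character M_1(0,y)); and the quotient M_3(z,y)/D is isomorphic to M_2(y). -/
/-- The defining relations of the affine Hecke algebra of type `A_2` (for `Gl_3`),
on the free algebra on four generators `T = X 0`, `T⁻¹ = X 1`, `S_1 = X 2`, `S_2 = X 3`. -/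
inductive HeckeRel (R : Type) [CommRing R] (q : R) :
    FreeAlgebra R (Fin 4) → FreeAlgebra R (Fin 4) → Prop
  | TTinv : HeckeRel R q (FreeAlgebra.ι R 0 * FreeAlgebra.ι R 1) 1
  | TinvT : HeckeRel R q (FreeAlgebra.ι R 1 * FreeAlgebra.ι R 0) 1
  | quad : HeckeRel R q
      ((FreeAlgebra.ι R 2 + 1) * (FreeAlgebra.ι R 2 - algebraMap R (FreeAlgebra R (Fin 4)) q)) 0
  | T3S1 : HeckeRel R q (FreeAlgebra.ι R 0 ^ 3 * FreeAlgebra.ι R 2)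
      (FreeAlgebra.ι R 2 * FreeAlgebra.ι R 0 ^ 3)
  | braid : HeckeRel R q (FreeAlgebra.ι R 2 * FreeAlgebra.ι R 3 * FreeAlgebra.ι R 2)
      (FreeAlgebra.ι R 3 * FreeAlgebra.ι R 2 * FreeAlgebra.ι R 3)
  | TS2 : HeckeRel R q (FreeAlgebra.ι R 0 * FreeAlgebra.ι R 3)
      (FreeAlgebra.ι R 2 * FreeAlgebra.ι R 0)

/-- The affine Hecke algebra `H_R` with parameter `q ∈ R`. -/
abbrev HeckeAlg (R : Type) [CommRing R] (q : R) := RingQuot (HeckeRel R q)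

namespace HeckeAlg

variable (R : Type) [CommRing R] (q : R)

noncomputable def gen (i : Fin 4) : HeckeAlg R q :=
  RingQuot.mkAlgHom R (HeckeRel R q) (FreeAlgebra.ι R i)

noncomputable def T : HeckeAlg R q := gen R q 0
noncomputable def Tinv : HeckeAlg R q := gen R q 1
noncomputable def S1 : HeckeAlg R q := gen R q 2
noncomputable def S2 : HeckeAlg R q := gen R q 3

theorem T_mul_Tinv : T R q * Tinv R q = 1 := by
  simpa [T, Tinv, gen, map_mul, map_one] using
    RingQuot.mkAlgHom_rel R (HeckeRel.TTinv (R := R) (q := q))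

theorem Tinv_mul_T : Tinv R q * T R q = 1 := by
  simpa [T, Tinv, gen, map_mul, map_one] using
    RingQuot.mkAlgHom_rel R (HeckeRel.TinvT (R := R) (q := q))

theorem quad_rel : (S1 R q + 1) * (S1 R q - algebraMap R (HeckeAlg R q) q) = 0 := by
  simpa [S1, gen, map_mul, map_add, map_sub, map_one, map_zero, AlgHom.commutes] using
    RingQuot.mkAlgHom_rel R (HeckeRel.quad (R := R) (q := q))

theorem T3_mul_S1 : T R q ^ 3 * S1 R q = S1 R q * T R q ^ 3 := by
  simpa [T, S1, gen, map_mul, map_pow] using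
    RingQuot.mkAlgHom_rel R (HeckeRel.T3S1 (R := R) (q := q))

theorem braid_rel : S1 R q * S2 R q * S1 R q = S2 R q * S1 R q * S2 R q := by
  simpa [S1, S2, gen, map_mul] using
    RingQuot.mkAlgHom_rel R (HeckeRel.braid (R := R) (q := q))

theorem T_mul_S2 : T R q * S2 R q = S1 R q * T R q := by
  simpa [T, S1, S2, gen, map_mul] using
    RingQuot.mkAlgHom_rel R (HeckeRel.TS2 (R := R) (q := q))

/-- The canonical (base change) ring homomorphism `H_R → H_S` induced by a ring
homomorphism `R → S` sending the parameter `q` to the parameter `q'`. -/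
noncomputable def map {R S : Type} [CommRing R] [CommRing S] (f : R →+* S) (q : R) (q' : S)
    (h : f q = q') : HeckeAlg R q →+* HeckeAlg S q' := by
  subst h
  letI : Algebra R (HeckeAlg S (f q)) :=
    RingHom.toAlgebra' ((algebraMap S (HeckeAlg S (f q))).comp f)
      (fun c x => by simpa using Algebra.commutes (f c) x)
  refine RingQuot.lift
    ⟨((FreeAlgebra.lift R fun i => gen S (f q) i : _ →ₐ[R] HeckeAlg S (f q)) :
        FreeAlgebra R (Fin 4) →+* HeckeAlg S (f q)), ?_⟩
  have key : ∀ i : Fin 4,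
      (FreeAlgebra.lift R fun j => gen S (f q) j) (FreeAlgebra.ι R i) = gen S (f q) i :=
    fun i => FreeAlgebra.lift_ι_apply _ _
  have keyq : (FreeAlgebra.lift R fun j => gen S (f q) j)
      (algebraMap R (FreeAlgebra R (Fin 4)) q) = algebraMap S (HeckeAlg S (f q)) (f q) := by
    rw [AlgHom.commutes]
    rfl
  intro a b hab
  cases hab with
  | TTinv => simpa [key, T, Tinv] using T_mul_Tinv S (f q)
  | TinvT => simpa [key, T, Tinv] using Tinv_mul_T S (f q)
  | quad => simpa [key, keyq, S1] using quad_rel S (f q)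
  | T3S1 => simpa [key, T, S1] using T3_mul_S1 S (f q)
  | braid => simpa [key, S1, S2] using braid_rel S (f q)
  | TS2 => simpa [key, T, S1, S2] using T_mul_S2 S (f q)

/-- `S_1⁻¹ = q⁻¹ (S_1 - q + 1)`, where `qi` is an inverse of `q` in `R`. -/
noncomputable def S1i (qi : R) : HeckeAlg R q :=
  algebraMap R (HeckeAlg R q) qi * (S1 R q - algebraMap R (HeckeAlg R q) q + 1)

/-- `S_2⁻¹ = q⁻¹ (S_2 - q + 1)`, where `qi` is an inverse of `q` in `R`. -/
noncomputable def S2i (qi : R) : HeckeAlg R q :=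
  algebraMap R (HeckeAlg R q) qi * (S2 R q - algebraMap R (HeckeAlg R q) q + 1)

/-- The Bernstein elements `Y_1 = q S_1⁻¹ S_2⁻¹ T`, `Y_2 = S_2⁻¹ T S_1`,
`Y_3 = q⁻¹ T S_1 S_2`, where `qi` is an inverse of `q` in `R`. -/
noncomputable def Y (qi : R) : Fin 3 → HeckeAlg R q :=
  ![algebraMap R (HeckeAlg R q) q * S1i R q qi * S2i R q qi * T R q,
    S2i R q qi * T R q * S1 R q,
    algebraMap R (HeckeAlg R q) qi * T R q * S1 R q * S2 R q]

end HeckeAlg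

noncomputable section

variable (p : ℕ) [Fact p.Prime] (k : Type) [Field k] [IsAlgClosed k] [CharP k p]

/-- `H_k = H ⊗_{ℤ[q]} k` with `q ↦ 0`. -/
abbrev Hk : Type := HeckeAlg k 0

/-- The action of `T` on a `1`-dimensional space: multiplication by `c`. -/
def Tmat1 (c : k) : Module.End k (Fin 1 → k) := Matrix.mulVecLin !![c]

/-- The action of `T` on the `2`-dimensional space with basis `w, Tw` where
`T(Tw) = -y²w - yTw`. -/
def Tmat2 (y : k) : Module.End k (Fin 2 → k) := Matrix.mulVecLin !![0, -y^2; 1, -y]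

/-- The action of `T` on the `3`-dimensional space with basis `v, Tv, T²v` where
`T(T²v) = zv`. -/
def Tmat3 (z : k) : Module.End k (Fin 3 → k) := Matrix.mulVecLin !![0, 0, z; 1, 0, 0; 0, 1, 0]

/-- The action of `T` on the `6`-dimensional space with basis `v, Tv, T²v, w, Tw, T²w`
where `T(T²v) = zv`, `T(T²w) = zw`. -/
def Tmat6 (z : k) : Module.End k (Fin 6 → k) := Matrix.mulVecLin
  !![0, 0, z, 0, 0, 0;
     1, 0, 0, 0, 0, 0;
     0, 1, 0, 0, 0, 0;
     0, 0, 0, 0, 0, z;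
     0, 0, 0, 1, 0, 0;
     0, 0, 0, 0, 1, 0]

/-- The action of `S_1` on `L_6(z,y)`: `S_1v = 0`, `S_1(Tv) = T²w`, `S_1(T²v) = -T²v`,
`S_1w = -w`, `S_1(Tw) = (y/z)T²v`, `S_1(T²w) = -T²w`. -/
def SL6 (z y : k) : Module.End k (Fin 6 → k) := Matrix.mulVecLin
  !![0, 0, 0,  0,  0,     0;
     0, 0, 0,  0,  0,     0;
     0, 0, -1, 0,  y / z, 0;
     0, 0, 0,  -1, 0,     0;
     0, 0, 0,  0,  0,     0;
     0, 1, 0,  0,  0,     -1]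

/-- The action of `S_1` on `L̃_6(z,y)`: as on `L_6(z,y)` except `S_1v = w`, `S_1(Tv) = 0`. -/
def SLt6 (z y : k) : Module.End k (Fin 6 → k) := Matrix.mulVecLin
  !![0, 0, 0,  0,  0,     0;
     0, 0, 0,  0,  0,     0;
     0, 0, -1, 0,  y / z, 0;
     1, 0, 0,  -1, 0,     0;
     0, 0, 0,  0,  0,     0;
     0, 0, 0,  0,  0,     -1]

/-- The action of `S_1` on `K_6(z,y,y')`: `S_1v = w`, `S_1(Tv) = (y/y')T²w`,
`S_1(T²v) = -T²v`, `S_1w = -w`, `S_1(Tw) = (y'/z)T²v`, `S_1(T²w) = -T²w`. -/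
def SK6 (z y y' : k) : Module.End k (Fin 6 → k) := Matrix.mulVecLin
  !![0, 0,      0,  0,  0,      0;
     0, 0,      0,  0,  0,      0;
     0, 0,      -1, 0,  y' / z, 0;
     1, 0,      0,  -1, 0,      0;
     0, 0,      0,  0,  0,      0;
     0, y / y', 0,  0,  0,      -1]

/-- The action of `S_1` on `M_3(z,y)`: `S_1v = 0`, `S_1(Tv) = y⁻¹T²v`, `S_1(T²v) = -T²v`. -/
def SM3 (y : k) : Module.End k (Fin 3 → k) := Matrix.mulVecLin
  !![0, 0, 0; 0, 0, 0; 0, y⁻¹, -1]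

/-- The action of `S_1` on `M̃_3(z,y)`: `S_1v = -v`, `S_1(Tv) = -y⁻¹T²v`, `S_1(T²v) = -T²v`. -/
def SMt3 (y : k) : Module.End k (Fin 3 → k) := Matrix.mulVecLin
  !![-1, 0, 0; 0, 0, 0; 0, -y⁻¹, -1]

/-- The action of `S_1` on `N_3(z,y)`: `S_1v = -v`, `S_1(Tv) = 0`, `S_1(T²v) = -yTv - T²v`. -/
def SN3 (y : k) : Module.End k (Fin 3 → k) := Matrix.mulVecLin
  !![-1, 0, 0; 0, 0, -y; 0, 0, -1]

/-- The action of `S_1` on `Ñ_3(z,y)`: `S_1v = 0`, `S_1(Tv) = 0`, `S_1(T²v) = yTv - T²v`. -/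
def SNt3 (y : k) : Module.End k (Fin 3 → k) := Matrix.mulVecLin
  !![0, 0, 0; 0, 0, y; 0, 0, -1]

/-- The action of `S_1` on `P_3(z)`: `S_1v = 0`, `S_1(Tv) = 0`, `S_1(T²v) = -T²v`. -/
def SP3 : Module.End k (Fin 3 → k) := Matrix.mulVecLin
  !![0, 0, 0; 0, 0, 0; 0, 0, -1]

/-- The action of `S_1` on `P̃_3(z)`: `S_1v = -v`, `S_1(Tv) = 0`, `S_1(T²v) = -T²v`. -/
def SPt3 : Module.End k (Fin 3 → k) := Matrix.mulVecLin
  !![-1, 0, 0; 0, 0, 0; 0, 0, -1]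

/-- The action of `S_1` on `M_2(y)`: `S_1w = -w`, `S_1(Tw) = 0`. -/
def SM2 : Module.End k (Fin 2 → k) := Matrix.mulVecLin !![-1, 0; 0, 0]

/-- The action of `S_1` on `M̃_2(y)`: `S_1w = 0`, `S_1(Tw) = -Tw`. -/
def SMt2 : Module.End k (Fin 2 → k) := Matrix.mulVecLin !![0, 0; 0, -1]

end

namespace Stmt13

variable (k : Type) [Field k]

/-- The inverse of `T` on `M_3(y³, y)`. -/
noncomputable def Ti (y : k) : Module.End k (Fin 3 → k) :=
  Matrix.mulVecLin !![0, 1, 0; 0, 0, 1; (y ^ 3)⁻¹, 0, 0]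

/-- The action of `S_2 = T⁻¹ S_1 T`. -/
noncomputable def S2 (y : k) : Module.End k (Fin 3 → k) :=
  Matrix.mulVecLin !![0, 0, 0; y⁻¹, -1, 0; 0, 0, 0]

theorem T_app (z : k) (x : Fin 3 → k) : Tmat3 k z x = ![z * x 2, x 0, x 1] := by
  ext i; fin_cases i <;> simp [Tmat3, Matrix.mulVec, dotProduct, Fin.sum_univ_three]

theorem Ti_app (y : k) (x : Fin 3 → k) : Ti k y x = ![x 1, x 2, (y ^ 3)⁻¹ * x 0] := by
  ext i; fin_cases i <;> simp [Ti, Matrix.mulVec, dotProduct, Fin.sum_univ_three]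

theorem S_app (y : k) (x : Fin 3 → k) : SM3 k y x = ![0, 0, y⁻¹ * x 1 - x 2] := by
  ext i; fin_cases i <;> simp [SM3, Matrix.mulVec, dotProduct, Fin.sum_univ_three, sub_eq_add_neg]

theorem S2_app (y : k) (x : Fin 3 → k) : S2 k y x = ![0, y⁻¹ * x 0 - x 1, 0] := by
  ext i; fin_cases i <;> simp [S2, Matrix.mulVec, dotProduct, Fin.sum_univ_three, sub_eq_add_neg]

theorem T2_app (y : k) (x : Fin 2 → k) : Tmat2 k y x = ![-y ^ 2 * x 1, x 0 - y * x 1] := by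
  ext i; fin_cases i <;> simp [Tmat2, Matrix.mulVec, dotProduct, Fin.sum_univ_two, sub_eq_add_neg]

theorem SM2_app (x : Fin 2 → k) : SM2 k x = ![- x 0, 0] := by
  ext i; fin_cases i <;> simp [SM2, Matrix.mulVec, dotProduct, Fin.sum_univ_two]

/-- Images of the generators. -/
noncomputable def gens (y : k) : Fin 4 → Module.End k (Fin 3 → k) :=
  ![Tmat3 k (y ^ 3), Ti k y, SM3 k y, S2 k y]

theorem exists_rep (y : k) (hy : y ≠ 0) :
    ∃ ρ : Hk k →ₐ[k] Module.End k (Fin 3 → k), ∀ i, ρ (HeckeAlg.gen k 0 i) = gens k y i := by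
  refine ⟨RingQuot.liftAlgHom k ⟨FreeAlgebra.lift k (gens k y), ?_⟩, ?_⟩
  · intro a b hab
    cases hab <;> refine LinearMap.ext fun x => ?_ <;> ext i <;> fin_cases i <;>
      simp [gens, pow_succ, T_app, Ti_app, S_app, S2_app] <;> field_simp <;> ring
  · intro i
    simp [HeckeAlg.gen]

theorem scalar (y : k) (hy : y ≠ 0) (ρ : Hk k →ₐ[k] Module.End k (Fin 3 → k))
    (hρ : ∀ i, ρ (HeckeAlg.gen k 0 i) = gens k y i) (a : Hk k) :
    ∃ c : k, ρ a ![y ^ 2, y, 1] = c • ![y ^ 2, y, 1] := by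
  obtain ⟨a, rfl⟩ := RingQuot.mkAlgHom_surjective k (HeckeRel k 0) a
  induction a using FreeAlgebra.induction with
  | grade0 r => exact ⟨r, by simp [AlgHom.commutes]⟩
  | grade1 i =>
    have h := hρ i
    rw [HeckeAlg.gen] at h
    rw [h]
    fin_cases i
    · refine ⟨y, ?_⟩
      ext j; fin_cases j <;> simp [gens, T_app] <;> ring
    · refine ⟨y⁻¹, ?_⟩
      ext j; fin_cases j <;> simp [gens, Ti_app] <;> field_simp
    · refine ⟨0, ?_⟩
      ext j; fin_cases j <;> simp [gens, S_app] <;> field_simp <;> ring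
    · refine ⟨0, ?_⟩
      ext j; fin_cases j <;> simp [gens, S2_app] <;> field_simp <;> ring
  | mul a b ha hb =>
    obtain ⟨c, hc⟩ := ha
    obtain ⟨d, hd⟩ := hb
    exact ⟨d * c, by rw [map_mul, map_mul, Module.End.mul_apply, hd, map_smul, hc, smul_smul]⟩
  | add a b ha hb =>
    obtain ⟨c, hc⟩ := ha
    obtain ⟨d, hd⟩ := hb
    exact ⟨c + d, by rw [map_add, map_add, LinearMap.add_apply, hc, hd, add_smul]⟩

theorem eq_span (y : k) (hy : y ≠ 0) (D : Submodule k (Fin 3 → k))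
    (hT : ∀ x ∈ D, Tmat3 k (y ^ 3) x ∈ D) (hS : ∀ x ∈ D, SM3 k y x ∈ D)
    (h0 : D ≠ ⊥) (h1 : D ≠ ⊤) : D = Submodule.span k {![y ^ 2, y, 1]} := by
  have key : ∀ x ∈ D, x 1 = y * x 2 := by
    intro x hx
    by_contra hne
    apply h1
    have hl : y⁻¹ * x 1 - x 2 ≠ 0 := by
      intro h
      apply hne
      field_simp at h
      linear_combination h
    have e2 : (![0, 0, 1] : Fin 3 → k) ∈ D := by
      have := D.smul_mem (y⁻¹ * x 1 - x 2)⁻¹ (hS x hx)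
      rw [S_app] at this
      simpa [hl] using this
    have e0 : (![1, 0, 0] : Fin 3 → k) ∈ D := by
      have := D.smul_mem (y ^ 3)⁻¹ (hT _ e2)
      rw [T_app] at this
      simpa [hy] using this
    have e1 : (![0, 1, 0] : Fin 3 → k) ∈ D := by
      have := hT _ e0
      rw [T_app] at this
      simpa using this
    rw [eq_top_iff]
    intro w _
    have : w = w 0 • ![1, 0, 0] + w 1 • ![0, 1, 0] + w 2 • ![0, 0, 1] := by
      ext i; fin_cases i <;> simp
    rw [this]
    exact D.add_mem (D.add_mem (D.smul_mem _ e0) (D.smul_mem _ e1)) (D.smul_mem _ e2)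
  have key2 : ∀ x ∈ D, x = x 2 • ![y ^ 2, y, 1] := by
    intro x hx
    have a := key x hx
    have b := key _ (hT x hx)
    simp [T_app] at b
    ext i; fin_cases i
    · simp [b, a]; ring
    · simp [a]; ring
    · simp
  apply le_antisymm
  · intro x hx
    rw [key2 x hx]
    exact Submodule.smul_mem _ _ (Submodule.mem_span_singleton_self _)
  · obtain ⟨x, hx, hx0⟩ := Submodule.exists_mem_ne_zero_of_ne_bot h0
    have h2 : x 2 ≠ 0 := by
      intro h
      apply hx0
      rw [key2 x hx, h, zero_smul]
    rw [Submodule.span_singleton_le_iff_mem]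
    have := D.smul_mem (x 2)⁻¹ hx
    rw [key2 x hx, smul_smul] at this
    simpa [h2] using this

/-- The projection `M_3(y³, y) → M_2(y)`. -/
noncomputable def proj (y : k) : (Fin 3 → k) →ₗ[k] (Fin 2 → k) :=
  Matrix.mulVecLin !![0, -y⁻¹, 1; (y ^ 3)⁻¹, -(y ^ 2)⁻¹, 0]

theorem proj_app (y : k) (x : Fin 3 → k) :
    proj k y x = ![x 2 - y⁻¹ * x 1, (y ^ 3)⁻¹ * x 0 - (y ^ 2)⁻¹ * x 1] := by
  ext i; fin_cases i <;> simp [proj, Matrix.mulVec, dotProduct, Fin.sum_univ_three] <;> ring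

theorem proj_surj (y : k) (hy : y ≠ 0) : Function.Surjective (proj k y) := by
  intro w
  refine ⟨![y ^ 3 * w 1, 0, w 0], ?_⟩
  ext i; fin_cases i <;> simp [proj_app, hy]

theorem proj_ker (y : k) (hy : y ≠ 0) :
    LinearMap.ker (proj k y) = Submodule.span k {![y ^ 2, y, 1]} := by
  ext x
  rw [LinearMap.mem_ker, Submodule.mem_span_singleton]
  constructor
  · intro h
    have a := congrFun h 0
    have b := congrFun h 1
    simp [proj_app] at a b
    field_simp at a b
    refine ⟨x 2, ?_⟩
    ext i; fin_cases i
    · simp; linear_combination y * a - b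
    · simp; linear_combination a
    · simp
  · rintro ⟨c, rfl⟩
    ext i; fin_cases i <;> simp [proj_app] <;> field_simp <;> ring

end Stmt13

/-- Let `z, y ∈ k^×` with `y³ = z`. Then the `H_k`-module `M_3(z,y)` has
exactly one `H_k`-submodule `D` other than `0` and `M_3(z,y)`; `D` is one-dimensional and on
`D` the element `T` acts by the scalar `y` and `S_1` acts by `0` (so `D` is isomorphic to the
character `M_1(0,y)`); and the quotient `M_3(z,y)/D` is isomorphic to `M_2(y)`. -/
theorem statement13 (p : ℕ) [Fact p.Prime] (k : Type) [Field k] [IsAlgClosed k] [CharP k p]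
    (z y : kˣ) (h : (y : k) ^ 3 = (z : k)) :
    ∃ ρ : Hk k →ₐ[k] Module.End k (Fin 3 → k),
      ρ (HeckeAlg.T k 0) = Tmat3 k z ∧ ρ (HeckeAlg.S1 k 0) = SM3 k y ∧
      (∃! D : Submodule k (Fin 3 → k),
        (∀ a : Hk k, ∀ x ∈ D, ρ a x ∈ D) ∧ D ≠ ⊥ ∧ D ≠ ⊤) ∧
      ∀ D : Submodule k (Fin 3 → k),
        (∀ a : Hk k, ∀ x ∈ D, ρ a x ∈ D) → D ≠ ⊥ → D ≠ ⊤ →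
          Module.finrank k D = 1 ∧
          (∀ x ∈ D, Tmat3 k z x = (y : k) • x ∧ SM3 k y x = 0) ∧
          ∃ g : ((Fin 3 → k) ⧸ D) ≃ₗ[k] (Fin 2 → k),
            (∀ x : Fin 3 → k,
              g (Submodule.Quotient.mk (Tmat3 k z x)) = Tmat2 k y (g (Submodule.Quotient.mk x))) ∧
            (∀ x : Fin 3 → k,
              g (Submodule.Quotient.mk (SM3 k y x)) = SM2 k (g (Submodule.Quotient.mk x))) := by
  have hy : (y : k) ≠ 0 := y.ne_zero
  rw [← h]
  generalize (y : k) = y at hy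
  obtain ⟨ρ, hρ⟩ := Stmt13.exists_rep k y hy
  have hT : ρ (HeckeAlg.T k 0) = Tmat3 k (y ^ 3) := hρ 0
  have hS : ρ (HeckeAlg.S1 k 0) = SM3 k y := hρ 2
  have hu : (![y ^ 2, y, 1] : Fin 3 → k) ≠ 0 := fun h => by simpa using congrFun h 2
  have uniq : ∀ D : Submodule k (Fin 3 → k),
      (∀ a : Hk k, ∀ x ∈ D, ρ a x ∈ D) → D ≠ ⊥ → D ≠ ⊤ →
        D = Submodule.span k {![y ^ 2, y, 1]} := by
    intro D hD h0 h1
    refine Stmt13.eq_span k y hy D (fun x hx => ?_) (fun x hx => ?_) h0 h1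
    · rw [← hT]; exact hD _ x hx
    · rw [← hS]; exact hD _ x hx
  refine ⟨ρ, hT, hS, ⟨Submodule.span k {![y ^ 2, y, 1]}, ⟨?_, ?_, ?_⟩, ?_⟩, ?_⟩
  · intro a x hx
    obtain ⟨c, rfl⟩ := Submodule.mem_span_singleton.1 hx
    obtain ⟨d, hd⟩ := Stmt13.scalar k y hy ρ hρ a
    rw [map_smul, hd]
    exact Submodule.smul_mem _ _ (Submodule.smul_mem _ _ (Submodule.mem_span_singleton_self _))
  · simpa [Submodule.span_singleton_eq_bot] using hu
  · intro htop
    have h1 := finrank_span_singleton (K := k) hu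
    rw [htop, finrank_top] at h1
    simp at h1
  · rintro D ⟨hD, h0, h1⟩
    exact uniq D hD h0 h1
  · intro D hD h0 h1
    obtain rfl := uniq D hD h0 h1
    refine ⟨finrank_span_singleton hu, ?_, ?_⟩
    · intro x hx
      obtain ⟨c, rfl⟩ := Submodule.mem_span_singleton.1 hx
      constructor
      · ext i; fin_cases i <;> simp [Stmt13.T_app] <;> ring
      · ext i; fin_cases i <;> simp [Stmt13.S_app] <;> field_simp <;> ring
    · refine ⟨(Submodule.quotEquivOfEq _ _ (Stmt13.proj_ker k y hy).symm).trans
        (LinearMap.quotKerEquivOfSurjective _ (Stmt13.proj_surj k y hy)), ?_, ?_⟩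
      · intro x
        change Stmt13.proj k y _ = Tmat2 k y (Stmt13.proj k y x)
        ext i; fin_cases i <;> simp [Stmt13.proj_app, Stmt13.T_app, Stmt13.T2_app] <;>
          field_simp <;> ring
      · intro x
        change Stmt13.proj k y _ = SM2 k (Stmt13.proj k y x)
        ext i; fin_cases i <;> simp [Stmt13.proj_app, Stmt13.S_app, Stmt13.SM2_app]
end

section
/- For z, y ∈ k^×, the formulas defining M̃_3(z,y) endow the 3-dimensional k-vector space with an H_k-module structure, and the H_k-module M̃_3(z,y) is simple if and only if y^3 ≠ z. -/
/-- The images of the four generators. -/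
noncomputable def genImg (k : Type) [Field k] (z y : k) : Fin 4 → Module.End k (Fin 3 → k) :=
  ![Tmat3 k z, Matrix.mulVecLin !![0, 1, 0; 0, 0, 1; z⁻¹, 0, 0], SMt3 k y,
    Matrix.mulVecLin !![0, 0, 0; -y⁻¹, -1, 0; 0, 0, -1]]

theorem Tmat3_vec (k : Type) [Field k] (z a b c : k) :
    Tmat3 k z ![a, b, c] = ![z * c, a, b] := by
  ext i; fin_cases i <;> simp [Tmat3, Matrix.mulVec, dotProduct, Fin.sum_univ_three]

theorem Tinv3_vec (k : Type) [Field k] (z a b c : k) :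
    (Matrix.mulVecLin !![0, 1, 0; 0, 0, 1; z⁻¹, 0, 0] : Module.End k (Fin 3 → k)) ![a, b, c]
      = ![b, c, z⁻¹ * a] := by
  ext i; fin_cases i <;> simp [Matrix.mulVec, dotProduct, Fin.sum_univ_three]

theorem SMt3_vec (k : Type) [Field k] (y a b c : k) :
    SMt3 k y ![a, b, c] = ![-a, 0, -y⁻¹ * b - c] := by
  ext i; fin_cases i <;>
    simp [SMt3, Matrix.mulVec, dotProduct, Fin.sum_univ_three, sub_eq_add_neg]

theorem S2t3_vec (k : Type) [Field k] (y a b c : k) :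
    (Matrix.mulVecLin !![0, 0, 0; -y⁻¹, -1, 0; 0, 0, -1] : Module.End k (Fin 3 → k)) ![a, b, c]
      = ![0, -y⁻¹ * a - b, -c] := by
  ext i; fin_cases i <;>
    simp [Matrix.mulVec, dotProduct, Fin.sum_univ_three, sub_eq_add_neg]

theorem vec_eta {k : Type} (x : Fin 3 → k) : x = ![x 0, x 1, x 2] := by
  ext i; fin_cases i <;> rfl

theorem end_ext {k : Type} [Field k] {f g : Module.End k (Fin 3 → k)}
    (h : ∀ a b c, f ![a, b, c] = g ![a, b, c]) : f = g := by
  refine LinearMap.ext fun x => ?_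
  rw [vec_eta x]; exact h _ _ _

theorem genImg_rel (k : Type) [Field k] (z y : k) (hz : z ≠ 0) (hy : y ≠ 0)
    ⦃a b : FreeAlgebra k (Fin 4)⦄ (h : HeckeRel k 0 a b) :
    FreeAlgebra.lift k (genImg k z y) a = FreeAlgebra.lift k (genImg k z y) b := by
  cases h <;>
    simp only [map_mul, map_one, map_add, map_sub, map_pow, map_zero, FreeAlgebra.lift_ι_apply,
      sub_zero] <;>
    simp only [genImg, Matrix.cons_val, pow_succ, pow_zero, one_mul] <;>
    refine end_ext fun a b c => ?_ <;>
    simp only [Module.End.mul_apply, LinearMap.add_apply, Module.End.one_apply,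
      LinearMap.zero_apply, Tmat3_vec, Tinv3_vec, SMt3_vec, S2t3_vec] <;>
    ext i <;> fin_cases i <;> simp <;> field_simp <;> ring

/-- The representation. -/
noncomputable def rep (k : Type) [Field k] (z y : k) (hz : z ≠ 0) (hy : y ≠ 0) :
    Hk k →ₐ[k] Module.End k (Fin 3 → k) :=
  RingQuot.liftAlgHom k ⟨FreeAlgebra.lift k (genImg k z y), genImg_rel k z y hz hy⟩

theorem rep_gen (k : Type) [Field k] (z y : k) (hz : z ≠ 0) (hy : y ≠ 0) (i : Fin 4) :
    rep k z y hz hy (HeckeAlg.gen k 0 i) = genImg k z y i := by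
  simp [rep, HeckeAlg.gen]

theorem rep_inv (k : Type) [Field k] (z y : k) (hz : z ≠ 0) (hy : y ≠ 0)
    (W : Submodule k (Fin 3 → k)) (hW : ∀ i, ∀ x ∈ W, genImg k z y i x ∈ W)
    (a : Hk k) : ∀ x ∈ W, rep k z y hz hy a x ∈ W := by
  obtain ⟨a, rfl⟩ := RingQuot.mkAlgHom_surjective k (HeckeRel k 0) a
  induction a using FreeAlgebra.induction with
  | grade0 r => intro x hx; simpa [Module.algebraMap_end_apply] using W.smul_mem r hx
  | grade1 i => intro x hx; have := hW i x hx; rwa [← rep_gen k z y hz hy] at this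
  | mul a b ha hb => intro x hx; simpa using ha _ (hb _ hx)
  | add a b ha hb => intro x hx; simpa using W.add_mem (ha _ hx) (hb _ hx)

/-- The invariant plane `x₀ + y x₁ + y² x₂ = 0`. -/
def plane (k : Type) [Field k] (y : k) : Submodule k (Fin 3 → k) where
  carrier := {x | x 0 + y * x 1 + y ^ 2 * x 2 = 0}
  zero_mem' := by simp
  add_mem' := by
    intro a b ha hb
    simp only [Set.mem_setOf_eq, Pi.add_apply] at *
    linear_combination ha + hb
  smul_mem' := by
    intro r a ha
    simp only [Set.mem_setOf_eq, Pi.smul_apply, smul_eq_mul] at *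
    linear_combination r * ha

theorem mem_plane (k : Type) [Field k] (y a b c : k) :
    ![a, b, c] ∈ plane k y ↔ a + y * b + y ^ 2 * c = 0 := Iff.rfl

theorem plane_inv (k : Type) [Field k] (z y : k) (hy : y ≠ 0) (h : y ^ 3 = z)
    (i : Fin 4) : ∀ x ∈ plane k y, genImg k z y i x ∈ plane k y := by
  intro x hx
  rw [vec_eta x] at hx ⊢
  generalize x 0 = a at *
  generalize x 1 = b at *
  generalize x 2 = c at *
  subst h
  rw [mem_plane] at hx
  fin_cases i <;>
    simp only [genImg, Matrix.cons_val, Fin.zero_eta, Fin.mk_one, Fin.reduceFinMk, Tmat3_vec, Tinv3_vec, SMt3_vec, S2t3_vec, mem_plane]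
  · linear_combination y * hx
  · field_simp
    linear_combination hx
  · field_simp
    linear_combination -hx
  · field_simp
    linear_combination -hx

theorem simple_aux (k : Type) [Field k] (z y : k) (hz : z ≠ 0) (hy : y ≠ 0) (h : y ^ 3 ≠ z)
    (W : Submodule k (Fin 3 → k)) (hT : ∀ x ∈ W, Tmat3 k z x ∈ W)
    (hS : ∀ x ∈ W, SMt3 k y x ∈ W) : W = ⊥ ∨ W = ⊤ := by
  by_cases hb : ∀ x ∈ W, x 1 = 0
  · left
    rw [eq_bot_iff]
    intro x hx
    have h1 := hb x hx
    have hx' := hx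
    rw [vec_eta x] at hx'
    have t1 := hT _ hx'
    rw [Tmat3_vec] at t1
    have t2 := hT _ t1
    rw [Tmat3_vec] at t2
    have e1 := hb _ t1
    have e2 := hb _ t2
    simp [hz] at e1 e2
    rw [Submodule.mem_bot, vec_eta x, h1, e1, e2]
    ext i; fin_cases i <;> rfl
  · right
    push Not at hb
    obtain ⟨x, hx, h1⟩ := hb
    have hu : ![0, y, -1] ∈ W := by
      have := W.smul_mem (y * (x 1)⁻¹) (W.add_mem (hS x hx) hx)
      convert this using 1
      rw [vec_eta x, SMt3_vec]
      ext i; fin_cases i <;> simp <;> field_simp <;> simp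
    have t1 := hT _ hu
    rw [Tmat3_vec] at t1
    have t2 := hT _ t1
    rw [Tmat3_vec] at t2
    have hd : y ^ 3 - z ≠ 0 := sub_ne_zero.mpr h
    have e0 : ![1, 0, 0] ∈ W := by
      have := W.smul_mem (y ^ 3 - z)⁻¹
        (W.add_mem (W.add_mem (W.smul_mem (y ^ 2 * z⁻¹) t2) (W.smul_mem y hu)) t1)
      convert this using 1
      ext i; fin_cases i <;> simp <;> field_simp <;> try first | (ring; done) | (simp; done)
    have e1 := hT _ e0
    rw [Tmat3_vec] at e1
    have e2 := hT _ e1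
    rw [Tmat3_vec] at e2
    rw [eq_top_iff]
    intro w _
    have := W.add_mem (W.add_mem (W.smul_mem (w 0) e0) (W.smul_mem (w 1) e1)) (W.smul_mem (w 2) e2)
    convert this using 1
    ext i; fin_cases i <;> simp

/-- For `z, y ∈ k^×`, the formulas defining `M̃_3(z,y)` endow the `3`-dimensional `k`-vector space with an `H_k`-module structure, and the `H_k`-module `M̃_3(z,y)` is simple if and only if `y³ ≠ z`. -/
theorem statement14 (p : ℕ) [Fact p.Prime] (k : Type) [Field k] [IsAlgClosed k] [CharP k p]
    (z y : kˣ) :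
    ∃ ρ : Hk k →ₐ[k] Module.End k (Fin 3 → k),
      ρ (HeckeAlg.T k 0) = Tmat3 k z ∧ ρ (HeckeAlg.S1 k 0) = SMt3 k y ∧
      ((∀ W : Submodule k (Fin 3 → k), (∀ a : Hk k, ∀ x ∈ W, ρ a x ∈ W) → W = ⊥ ∨ W = ⊤) ↔ ((y : k) ^ 3 ≠ (z : k))) := by
  have hz : (z : k) ≠ 0 := z.ne_zero
  have hy : (y : k) ≠ 0 := y.ne_zero
  have h0 : rep k z y hz hy (HeckeAlg.T k 0) = Tmat3 k z := rep_gen k z y hz hy 0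
  have h2 : rep k z y hz hy (HeckeAlg.S1 k 0) = SMt3 k y := rep_gen k z y hz hy 2
  refine ⟨rep k z y hz hy, h0, h2, ?_, ?_⟩
  · intro hs h
    rcases hs (plane k y) (rep_inv k z y hz hy _ (plane_inv k z y hy h)) with e | e
    · have : ![0, (y : k), -1] ∈ plane k (y : k) := by rw [mem_plane]; ring
      rw [e, Submodule.mem_bot] at this
      exact hy (congrFun this 1)
    · have : ![1, 0, 0] ∈ plane k (y : k) := by rw [e]; trivial
      rw [mem_plane] at this
      simp at this
  · intro h W hW
    refine simple_aux k z y hz hy h W (fun x hx => ?_) (fun x hx => ?_)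
    · rw [← h0]; exact hW _ x hx
    · rw [← h2]; exact hW _ x hx
end

section
/- For z, y ∈ k^×, the formulas defining N_3(z,y) endow the 3-dimensional k-vector space with an H_k-module structure, and the H_k-module N_3(z,y) is simple if and only if y^3 ≠ z. -/
/-- For `z, y ∈ k^×`, the formulas defining `N_3(z,y)` endow the `3`-dimensional `k`-vector space with an `H_k`-module structure, and the `H_k`-module `N_3(z,y)` is simple if and only if `y³ ≠ z`. -/
theorem statement15 (p : ℕ) [Fact p.Prime] (k : Type) [Field k] [IsAlgClosed k] [CharP k p]
    (z y : kˣ) :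
    ∃ ρ : Hk k →ₐ[k] Module.End k (Fin 3 → k),
      ρ (HeckeAlg.T k 0) = Tmat3 k z ∧ ρ (HeckeAlg.S1 k 0) = SN3 k y ∧
      ((∀ W : Submodule k (Fin 3 → k), (∀ a : Hk k, ∀ x ∈ W, ρ a x ∈ W) → W = ⊥ ∨ W = ⊤) ↔ ((y : k) ^ 3 ≠ (z : k))) := by
  have hz : (z : k) ≠ 0 := z.ne_zero
  have hy : (y : k) ≠ 0 := y.ne_zero
  let g : Fin 4 → Module.End k (Fin 3 → k) := ![Tmat3 k z,
    Matrix.mulVecLin !![0, 1, 0; 0, 0, 1; (z : k)⁻¹, 0, 0], SN3 k y,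
    Matrix.mulVecLin !![0, -(y : k), 0; 0, -1, 0; 0, 0, -1]]
  have hT : ∀ x : Fin 3 → k, Tmat3 k z x = ![z * x 2, x 0, x 1] := by
    intro x; ext i
    fin_cases i <;> simp [Tmat3, Matrix.mulVec, dotProduct, Fin.sum_univ_three]
  have hS : ∀ x : Fin 3 → k, SN3 k y x = ![- x 0, - (y * x 2), - x 2] := by
    intro x; ext i
    fin_cases i <;> simp [SN3, Matrix.mulVec, dotProduct, Fin.sum_univ_three]
  have g0 : ∀ x : Fin 3 → k, g 0 x = ![z * x 2, x 0, x 1] := hT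
  have g2 : ∀ x : Fin 3 → k, g 2 x = ![- x 0, - (y * x 2), - x 2] := hS
  have g1 : ∀ x : Fin 3 → k, g 1 x = ![x 1, x 2, (z : k)⁻¹ * x 0] := by
    intro x; ext i
    fin_cases i <;> simp [g, Matrix.mulVec, dotProduct, Fin.sum_univ_three]
  have g3 : ∀ x : Fin 3 → k, g 3 x = ![- (y * x 1), - x 1, - x 2] := by
    intro x; ext i
    fin_cases i <;> simp [g, Matrix.mulVec, dotProduct, Fin.sum_univ_three]
  have key : ∀ i : Fin 4, (FreeAlgebra.lift k g) (FreeAlgebra.ι k i) = g i :=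
    fun i => FreeAlgebra.lift_ι_apply _ _
  have hrel : ∀ ⦃a b : FreeAlgebra k (Fin 4)⦄, HeckeRel k 0 a b →
      FreeAlgebra.lift k g a = FreeAlgebra.lift k g b := by
    intro a b hab
    cases hab <;> simp only [map_mul, map_add, map_sub, map_pow, map_one, map_zero, key] <;>
      refine LinearMap.ext fun x => ?_ <;> ext i <;> fin_cases i <;>
      simp [pow_succ, g0, g1, g2, g3, hz] <;> ring
  let ρ : Hk k →ₐ[k] Module.End k (Fin 3 → k) := RingQuot.liftAlgHom k ⟨FreeAlgebra.lift k g, hrel⟩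
  have hρ : ∀ a, ρ (RingQuot.mkAlgHom k (HeckeRel k 0) a) = FreeAlgebra.lift k g a := fun a =>
    RingQuot.liftAlgHom_mkAlgHom_apply k _ hrel a
  have hρT : ρ (HeckeAlg.T k 0) = Tmat3 k z := (hρ _).trans (key 0)
  have hρS : ρ (HeckeAlg.S1 k 0) = SN3 k y := (hρ _).trans (key 2)
  refine ⟨ρ, hρT, hρS, ?_, ?_⟩
  · intro h hyz
    let v : Fin 3 → k := ![(y : k) ^ 2, y, 1]
    have hgen : ∀ i, ∃ c : k, g i v = c • v := by
      have hzi : (z : k)⁻¹ * (y : k) ^ 2 = (y : k)⁻¹ := by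
        rw [← hyz]; field_simp
      intro i
      fin_cases i
      · refine ⟨y, ?_⟩
        change g 0 v = _
        rw [g0]; ext i; fin_cases i <;> simp [v, ← hyz] <;> ring
      · refine ⟨(y : k)⁻¹, ?_⟩
        change g 1 v = _
        rw [g1]; ext i; fin_cases i <;> simp [v, hzi] <;> field_simp
      · refine ⟨-1, ?_⟩
        change g 2 v = _
        rw [g2]; ext i; fin_cases i <;> simp [v]
      · refine ⟨-1, ?_⟩
        change g 3 v = _
        rw [g3]; ext i; fin_cases i <;> simp [v] <;> ring
    have hall : ∀ a : FreeAlgebra k (Fin 4), ∃ c : k, FreeAlgebra.lift k g a v = c • v := by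
      intro a
      induction a using FreeAlgebra.induction with
      | grade0 r => exact ⟨r, by simp⟩
      | grade1 i => rw [key]; exact hgen i
      | mul a b ha hb =>
        obtain ⟨c, hc⟩ := ha
        obtain ⟨d, hd⟩ := hb
        exact ⟨d * c, by simp [hc, hd, mul_smul]⟩
      | add a b ha hb =>
        obtain ⟨c, hc⟩ := ha
        obtain ⟨d, hd⟩ := hb
        exact ⟨c + d, by simp [hc, hd, add_smul]⟩
    have hv : v ∈ Submodule.span k {v} := Submodule.mem_span_singleton_self v
    rcases h (Submodule.span k {v}) (by
      intro a x hx
      obtain ⟨a, rfl⟩ := RingQuot.mkAlgHom_surjective k (HeckeRel k 0) a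
      obtain ⟨d, rfl⟩ := Submodule.mem_span_singleton.1 hx
      obtain ⟨c, hc⟩ := hall a
      rw [hρ, map_smul, hc]
      exact Submodule.smul_mem _ _ (Submodule.smul_mem _ _ hv)) with hW | hW
    · rw [hW, Submodule.mem_bot] at hv
      have := congrFun hv 2
      simp [v] at this
    · have h1 : (![1, 0, 0] : Fin 3 → k) ∈ Submodule.span k {v} := by rw [hW]; trivial
      obtain ⟨d, hd⟩ := Submodule.mem_span_singleton.1 h1
      have e0 := congrFun hd 0
      have e2 := congrFun hd 2
      simp [v] at e0 e2
      simp [e2] at e0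
  · intro hyz W hW
    have hWT : ∀ x ∈ W, (![z * x 2, x 0, x 1] : Fin 3 → k) ∈ W := by
      intro x hx
      rw [← hT, ← hρT]; exact hW _ x hx
    have hWS : ∀ x ∈ W, (![- x 0, - (y * x 2), - x 2] : Fin 3 → k) ∈ W := by
      intro x hx
      rw [← hS, ← hρS]; exact hW _ x hx
    by_cases hc : ∀ x ∈ W, x 1 = y * x 2
    · left
      rw [Submodule.eq_bot_iff]
      intro x hx
      have a1 := hc x hx
      have a2 := hc _ (hWT x hx)
      have a3 := hc _ (hWT _ (hWT x hx))
      simp at a2 a3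
      have hx2 : x 2 = 0 := by
        have : ((y : k) ^ 3 - z) * x 2 = 0 := by
          rw [a2, a1] at a3
          linear_combination -a3
        exact (mul_eq_zero.1 this).resolve_left (sub_ne_zero.2 hyz)
      ext i
      fin_cases i <;> simp [a1, a2, hx2]
    · right
      push Not at hc
      obtain ⟨x, hx, hne⟩ := hc
      have hne' : x 1 - y * x 2 ≠ 0 := sub_ne_zero.2 hne
      have e1 : (![0, 1, 0] : Fin 3 → k) ∈ W := by
        have := W.smul_mem (x 1 - y * x 2)⁻¹ (W.add_mem (hWS x hx) hx)
        convert this using 1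
        ext i
        fin_cases i
        · change (0 : k) = (x 1 - y * x 2)⁻¹ * (- x 0 + x 0)
          ring
        · change (1 : k) = (x 1 - y * x 2)⁻¹ * (- (y * x 2) + x 1)
          rw [neg_add_eq_sub, inv_mul_cancel₀ hne']
        · change (0 : k) = (x 1 - y * x 2)⁻¹ * (- x 2 + x 2)
          ring
      have e2 := hWT _ e1
      have e0 := hWT _ e2
      rw [Submodule.eq_top_iff']
      intro w
      have := W.add_mem (W.add_mem (W.smul_mem (w 1) e1) (W.smul_mem (w 2) e2))
        (W.smul_mem (w 0 * (z : k)⁻¹) e0)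
      convert this using 1
      ext i
      fin_cases i <;> simp [hz]
end

section
/- For z, y ∈ k^×, the formulas defining Ñ_3(z,y) endow the 3-dimensional k-vector space with an H_k-module structure, and the H_k-module Ñ_3(z,y) is simple if and only if y^3 ≠ z. -/
theorem Tmat3_apply' (k : Type) [Field k] (z : k) (x : Fin 3 → k) :
    Tmat3 k z x = ![z * x 2, x 0, x 1] := by
  ext i; fin_cases i <;> simp [Tmat3, Matrix.mulVec, dotProduct, Fin.sum_univ_three]

theorem SNt3_apply' (k : Type) [Field k] (y : k) (x : Fin 3 → k) :
    SNt3 k y x = ![0, y * x 2, - x 2] := by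
  ext i; fin_cases i <;> simp [SNt3, Matrix.mulVec, dotProduct, Fin.sum_univ_three]

/-- The action of `T⁻¹` on `Ñ_3(z,y)`. -/
noncomputable def Ninv (k : Type) [Field k] (z : k) : Module.End k (Fin 3 → k) :=
  Matrix.mulVecLin !![0, 1, 0; 0, 0, 1; z⁻¹, 0, 0]

theorem Ninv_apply' (k : Type) [Field k] (z : k) (x : Fin 3 → k) :
    Ninv k z x = ![x 1, x 2, z⁻¹ * x 0] := by
  ext i; fin_cases i <;> simp [Ninv, Matrix.mulVec, dotProduct, Fin.sum_univ_three]

/-- The action of `S_2` on `Ñ_3(z,y)`. -/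
noncomputable def NS2 (k : Type) [Field k] (y : k) : Module.End k (Fin 3 → k) :=
  Matrix.mulVecLin !![0, y, 0; 0, -1, 0; 0, 0, 0]

theorem NS2_apply' (k : Type) [Field k] (y : k) (x : Fin 3 → k) :
    NS2 k y x = ![y * x 1, - x 1, 0] := by
  ext i; fin_cases i <;> simp [NS2, Matrix.mulVec, dotProduct, Fin.sum_univ_three]

/-- The images of the four generators. -/
noncomputable def Ngen (k : Type) [Field k] (z y : k) : Fin 4 → Module.End k (Fin 3 → k) :=
  ![Tmat3 k z, Ninv k z, SNt3 k y, NS2 k y]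

theorem Ngen_rel (k : Type) [Field k] (z y : k) (hz : z ≠ 0) :
    ∀ ⦃a b : FreeAlgebra k (Fin 4)⦄, HeckeRel k 0 a b →
      FreeAlgebra.lift k (Ngen k z y) a = FreeAlgebra.lift k (Ngen k z y) b := by
  intro a b hab
  cases hab <;>
  · simp only [map_mul, map_add, map_sub, map_one, map_zero, map_pow, FreeAlgebra.lift_ι_apply]
    refine LinearMap.ext fun x => funext fun i => ?_
    fin_cases i <;>
      simp [Ngen, Tmat3_apply', SNt3_apply', Ninv_apply', NS2_apply', pow_succ, hz] <;> ring

/-- The representation `Ñ_3(z,y)`. -/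
noncomputable def Nrep (k : Type) [Field k] (z y : k) (hz : z ≠ 0) :
    Hk k →ₐ[k] Module.End k (Fin 3 → k) :=
  RingQuot.liftAlgHom k ⟨FreeAlgebra.lift k (Ngen k z y), Ngen_rel k z y hz⟩

theorem Nrep_gen (k : Type) [Field k] (z y : k) (hz : z ≠ 0) (i : Fin 4) :
    Nrep k z y hz (HeckeAlg.gen k 0 i) = Ngen k z y i := by
  simp [Nrep, HeckeAlg.gen]

/-- A subspace stable under the generators is stable under the whole algebra. -/
theorem Nrep_stable (k : Type) [Field k] (z y : k) (hz : z ≠ 0) (W : Submodule k (Fin 3 → k))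
    (h : ∀ i, ∀ x ∈ W, Ngen k z y i x ∈ W) (a : Hk k) : ∀ x ∈ W, Nrep k z y hz a x ∈ W := by
  obtain ⟨b, rfl⟩ := RingQuot.mkAlgHom_surjective k (HeckeRel k 0) a
  induction b using FreeAlgebra.induction with
  | grade0 r =>
    intro x hx
    rw [AlgHom.commutes, AlgHom.commutes, Module.algebraMap_end_apply]
    exact W.smul_mem r hx
  | grade1 i =>
    intro x hx
    have := Nrep_gen k z y hz i
    rw [HeckeAlg.gen] at this
    rw [this]
    exact h i x hx
  | mul a b ha hb =>
    intro x hx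
    rw [map_mul, map_mul]
    exact ha _ (hb _ hx)
  | add a b ha hb =>
    intro x hx
    rw [map_add, map_add]
    exact W.add_mem (ha _ hx) (hb _ hx)

/-- For `y³ = z`, the functional whose kernel is a proper submodule. -/
noncomputable def Nfun (k : Type) [Field k] (y : k) : (Fin 3 → k) →ₗ[k] k :=
  LinearMap.proj 0 + y • LinearMap.proj 1 + y ^ 2 • LinearMap.proj 2

theorem Nfun_apply (k : Type) [Field k] (y : k) (x : Fin 3 → k) :
    Nfun k y x = x 0 + y * x 1 + y ^ 2 * x 2 := by
  simp [Nfun]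

theorem N_top (k : Type) [Field k] (z y : k) (hz : z ≠ 0) (hyz : y ^ 3 ≠ z)
    (W : Submodule k (Fin 3 → k)) (hT : ∀ x ∈ W, Tmat3 k z x ∈ W)
    (hS : ∀ x ∈ W, SNt3 k y x ∈ W) (hW : W ≠ ⊥) : W = ⊤ := by
  -- some element of `W` has nonzero last coordinate
  have h1 : ∃ x ∈ W, x 2 ≠ 0 := by
    by_contra! hcon
    apply hW
    rw [Submodule.eq_bot_iff]
    intro x hx
    have a2 := hcon x hx
    have a1 := hcon _ (hT x hx)
    have a0 := hcon _ (hT _ (hT x hx))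
    simp [Tmat3_apply'] at a1 a0
    ext i; fin_cases i <;> simp [a0, a1, a2]
  obtain ⟨x, hx, hx2⟩ := h1
  have hu : (![0, y, -1] : Fin 3 → k) ∈ W := by
    have := W.smul_mem (x 2)⁻¹ (hS x hx)
    convert this using 1
    rw [SNt3_apply']
    ext i; fin_cases i <;> simp <;> field_simp
  have hTu := hT _ hu
  have hTTu := hT _ hTu
  have h0 : (y ^ 3 - z) ≠ 0 := sub_ne_zero.mpr hyz
  have he0 : (![1, 0, 0] : Fin 3 → k) ∈ W := by
    have := W.smul_mem (y ^ 3 - z)⁻¹ (W.add_mem (W.smul_mem (y ^ 2 * z⁻¹) hTTu)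
      (W.add_mem (W.smul_mem y hu) hTu))
    convert this using 1
    simp only [Tmat3_apply']
    ext i; fin_cases i <;> simp <;> field_simp <;> ring_nf <;> simp
  have he1 := hT _ he0
  have he2 := hT _ he1
  rw [Submodule.eq_top_iff']
  intro w
  have := W.add_mem (W.add_mem (W.smul_mem (w 0) he0) (W.smul_mem (w 1) he1))
    (W.smul_mem (w 2) he2)
  convert this using 1
  simp only [Tmat3_apply']
  ext i; fin_cases i <;> simp

/-- For `z, y ∈ k^×`, the formulas defining `Ñ_3(z,y)` endow the `3`-dimensional `k`-vector space with an `H_k`-module structure, and the `H_k`-module `Ñ_3(z,y)` is simple if and only if `y³ ≠ z`. -/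
theorem statement16 (p : ℕ) [Fact p.Prime] (k : Type) [Field k] [IsAlgClosed k] [CharP k p]
    (z y : kˣ) :
    ∃ ρ : Hk k →ₐ[k] Module.End k (Fin 3 → k),
      ρ (HeckeAlg.T k 0) = Tmat3 k z ∧ ρ (HeckeAlg.S1 k 0) = SNt3 k y ∧
      ((∀ W : Submodule k (Fin 3 → k), (∀ a : Hk k, ∀ x ∈ W, ρ a x ∈ W) → W = ⊥ ∨ W = ⊤) ↔ ((y : k) ^ 3 ≠ (z : k))) := by
  have hT : Nrep k z y z.ne_zero (HeckeAlg.T k 0) = Tmat3 k z := Nrep_gen k z y z.ne_zero 0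
  have hS : Nrep k z y z.ne_zero (HeckeAlg.S1 k 0) = SNt3 k y := Nrep_gen k z y z.ne_zero 2
  refine ⟨Nrep k z y z.ne_zero, hT, hS, ?_, ?_⟩
  · intro h hyz
    have hy : (y : k) ≠ 0 := y.ne_zero
    have hst := Nrep_stable k z y z.ne_zero (LinearMap.ker (Nfun k y)) (by
      intro i x hx
      rw [LinearMap.mem_ker, Nfun_apply] at hx ⊢
      rw [← hyz]
      fin_cases i
      · simp [Ngen, Tmat3_apply']
        linear_combination (y : k) * hx
      · simp [Ngen, Ninv_apply']
        field_simp
        linear_combination hx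
      · simp [Ngen, SNt3_apply']
        ring
      · simp [Ngen, NS2_apply'])
    rcases h _ hst with h | h
    · have : (![0, (y : k), -1] : Fin 3 → k) ∈ LinearMap.ker (Nfun k (y : k)) := by
        rw [LinearMap.mem_ker, Nfun_apply]
        simp
        ring
      rw [h, Submodule.mem_bot] at this
      have := congrFun this 1
      simp at this
    · have : (![1, 0, 0] : Fin 3 → k) ∈ LinearMap.ker (Nfun k (y : k)) := by
        rw [h]; trivial
      rw [LinearMap.mem_ker, Nfun_apply] at this
      simp at this
  · intro hyz W hW
    by_cases hb : W = ⊥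
    · exact Or.inl hb
    · refine Or.inr (N_top k z y z.ne_zero hyz W (fun x hx => ?_) (fun x hx => ?_) hb)
      · rw [← hT]; exact hW _ x hx
      · rw [← hS]; exact hW _ x hx
end

section
/- For every y ∈ k^×, the H_k-modules M_2(y) and M̃_2(y) are simple and are not isomorphic to each other. -/
/-- Build an algebra map out of `H_k` from 2 by 2 matrices satisfying the relations. -/
theorem exists_rep (k : Type) [Field k] (A B S U : Matrix (Fin 2) (Fin 2) k)
    (h1 : A * B = 1) (h2 : B * A = 1) (h3 : (S + 1) * S = 0) (h4 : A ^ 3 * S = S * A ^ 3)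
    (h5 : S * U * S = U * S * U) (h6 : A * U = S * A) :
    ∃ ρ : HeckeAlg k 0 →ₐ[k] Module.End k (Fin 2 → k),
      ρ (HeckeAlg.T k 0) = Matrix.mulVecLin A ∧ ρ (HeckeAlg.S1 k 0) = Matrix.mulVecLin S := by
  let φ : FreeAlgebra k (Fin 4) →ₐ[k] Matrix (Fin 2) (Fin 2) k := FreeAlgebra.lift k ![A, B, S, U]
  have e0 : φ (FreeAlgebra.ι k 0) = A := FreeAlgebra.lift_ι_apply _ _
  have e1 : φ (FreeAlgebra.ι k 1) = B := FreeAlgebra.lift_ι_apply _ _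
  have e2 : φ (FreeAlgebra.ι k 2) = S := FreeAlgebra.lift_ι_apply _ _
  have e3 : φ (FreeAlgebra.ι k 3) = U := FreeAlgebra.lift_ι_apply _ _
  have hφ : ∀ ⦃a b⦄, HeckeRel k 0 a b → φ a = φ b := by
    intro a b hab
    cases hab with
    | TTinv => simp only [map_mul, map_one, e0, e1, h1]
    | TinvT => simp only [map_mul, map_one, e0, e1, h2]
    | quad => simp only [map_mul, map_one, map_add, map_sub, map_zero, sub_zero, e2, h3]
    | T3S1 => simp only [map_mul, map_pow, e0, e2, h4]
    | braid => simp only [map_mul, e3, e2, h5]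
    | TS2 => simp only [map_mul, e0, e2, e3, h6]
  let ψ : HeckeAlg k 0 →ₐ[k] Matrix (Fin 2) (Fin 2) k := RingQuot.liftAlgHom k ⟨φ, hφ⟩
  have f0 : ψ (HeckeAlg.T k 0) = A :=
    (RingQuot.liftAlgHom_mkAlgHom_apply k φ hφ _).trans e0
  have f2 : ψ (HeckeAlg.S1 k 0) = S :=
    (RingQuot.liftAlgHom_mkAlgHom_apply k φ hφ _).trans e2
  refine ⟨(Matrix.toLinAlgEquiv' : Matrix (Fin 2) (Fin 2) k ≃ₐ[k] _).toAlgHom.comp ψ, ?_, ?_⟩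
  · change Matrix.toLinAlgEquiv' (ψ (HeckeAlg.T k 0)) = _
    rw [f0]
    rfl
  · change Matrix.toLinAlgEquiv' (ψ (HeckeAlg.S1 k 0)) = _
    rw [f2]
    rfl

theorem Tmat2_apply (k : Type) [Field k] (y a b : k) :
    Tmat2 k y ![a, b] = ![-y ^ 2 * b, a - y * b] := by
  ext i
  fin_cases i <;> simp [Tmat2, Matrix.mulVec, dotProduct, Fin.sum_univ_two, sub_eq_add_neg]

theorem SM2_apply (k : Type) [Field k] (a b : k) : SM2 k ![a, b] = ![-a, 0] := by
  ext i
  fin_cases i <;> simp [SM2, Matrix.mulVec, dotProduct, Fin.sum_univ_two]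

theorem SMt2_apply (k : Type) [Field k] (a b : k) : SMt2 k ![a, b] = ![0, -b] := by
  ext i
  fin_cases i <;> simp [SMt2, Matrix.mulVec, dotProduct, Fin.sum_univ_two]

theorem vec2_eta (k : Type) (x : Fin 2 → k) : x = ![x 0, x 1] := by
  ext i
  fin_cases i <;> rfl

/-- A subspace stable under `T` and under the projection to one coordinate is trivial. -/
theorem stable_trivial (k : Type) [Field k] (y : k) (hy : y ≠ 0)
    (W : Submodule k (Fin 2 → k)) (hT : ∀ x ∈ W, Tmat2 k y x ∈ W)
    (h0 : ∀ a b : k, ![a, b] ∈ W → ![a, 0] ∈ W)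
    (h1 : ∀ a b : k, ![a, b] ∈ W → ![0, b] ∈ W) : W = ⊥ ∨ W = ⊤ := by
  have s0 : ∀ a : k, a ≠ 0 → ![a, 0] ∈ W → ∀ c, ![c, 0] ∈ W := by
    intro a ha h c
    have := W.smul_mem (c / a) h
    simpa [ha] using this
  have s1 : ∀ a : k, a ≠ 0 → ![0, a] ∈ W → ∀ c, ![0, c] ∈ W := by
    intro a ha h c
    have := W.smul_mem (c / a) h
    simpa [ha] using this
  have key : (∀ c, ![c, 0] ∈ W) → (∀ c, ![0, c] ∈ W) → W = ⊤ := by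
    intro p q
    rw [eq_top_iff]
    intro x _
    have := W.add_mem (p (x 0)) (q (x 1))
    rw [vec2_eta k x]
    simpa using this
  by_cases hW : W = ⊥
  · exact Or.inl hW
  right
  obtain ⟨x, hx, hx0⟩ := W.exists_mem_ne_zero_of_ne_bot hW
  rw [vec2_eta k x] at hx
  by_cases ha : x 0 = 0
  · have hb : x 1 ≠ 0 := by
      intro hb
      apply hx0
      rw [vec2_eta k x, ha, hb]
      simp
    have q := s1 _ hb (h1 _ _ hx)
    refine key ?_ q
    have t := hT _ (q 1)
    rw [Tmat2_apply] at t
    exact s0 _ (by simpa using hy) (h0 _ _ t)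
  · have q := s0 _ ha (h0 _ _ hx)
    refine key q ?_
    have t := hT _ (q 1)
    rw [Tmat2_apply] at t
    exact s1 _ (by simp) (h1 _ _ t)

/-- For every `y ∈ k^×`, the `H_k`-modules `M_2(y)` and `M̃_2(y)` are simple
and are not isomorphic to each other. -/
theorem statement18 (p : ℕ) [Fact p.Prime] (k : Type) [Field k] [IsAlgClosed k] [CharP k p]
    (y : kˣ) :
    ∃ ρ ρt : Hk k →ₐ[k] Module.End k (Fin 2 → k),
      ρ (HeckeAlg.T k 0) = Tmat2 k y ∧ ρ (HeckeAlg.S1 k 0) = SM2 k ∧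
      ρt (HeckeAlg.T k 0) = Tmat2 k y ∧ ρt (HeckeAlg.S1 k 0) = SMt2 k ∧
      (∀ W : Submodule k (Fin 2 → k), (∀ a : Hk k, ∀ x ∈ W, ρ a x ∈ W) → W = ⊥ ∨ W = ⊤) ∧
      (∀ W : Submodule k (Fin 2 → k), (∀ a : Hk k, ∀ x ∈ W, ρt a x ∈ W) → W = ⊥ ∨ W = ⊤) ∧
      ¬ ∃ g : (Fin 2 → k) ≃ₗ[k] (Fin 2 → k), ∀ (a : Hk k) (x : Fin 2 → k),
          g (ρ a x) = ρt a (g x) := by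
  have hy : (y : k) ≠ 0 := y.ne_zero
  obtain ⟨ρ, hT, hS⟩ := exists_rep k !![0, -(y : k)^2; 1, -(y : k)]
    !![-(y : k)⁻¹, 1; -((y : k)⁻¹)^2, 0] !![-1, 0; 0, 0] !![0, -(y : k); 0, -1]
    (by ext i j; fin_cases i <;> fin_cases j <;> simp [Matrix.one_apply] <;> field_simp <;> ring)
    (by ext i j; fin_cases i <;> fin_cases j <;> simp [Matrix.one_apply] <;> field_simp <;> ring)
    (by ext i j; fin_cases i <;> fin_cases j <;> simp [Matrix.one_fin_two])
    (by ext i j; fin_cases i <;> fin_cases j <;> simp [pow_succ] <;> ring)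
    (by ext i j; fin_cases i <;> fin_cases j <;> simp)
    (by ext i j; fin_cases i <;> fin_cases j <;> simp <;> ring)
  obtain ⟨ρt, hTt, hSt⟩ := exists_rep k !![0, -(y : k)^2; 1, -(y : k)]
    !![-(y : k)⁻¹, 1; -((y : k)⁻¹)^2, 0] !![0, 0; 0, -1] !![-1, (y : k); 0, 0]
    (by ext i j; fin_cases i <;> fin_cases j <;> simp [Matrix.one_apply] <;> field_simp <;> ring)
    (by ext i j; fin_cases i <;> fin_cases j <;> simp [Matrix.one_apply] <;> field_simp <;> ring)
    (by ext i j; fin_cases i <;> fin_cases j <;> simp [Matrix.one_fin_two])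
    (by ext i j; fin_cases i <;> fin_cases j <;> simp [pow_succ] <;> ring)
    (by ext i j; fin_cases i <;> fin_cases j <;> simp)
    (by ext i j; fin_cases i <;> fin_cases j <;> simp <;> ring)
  change _ = Tmat2 k y at hT hTt
  change _ = SM2 k at hS
  change _ = SMt2 k at hSt
  refine ⟨ρ, ρt, hT, hS, hTt, hSt, ?_, ?_, ?_⟩
  · intro W hW
    have hs : ∀ a b : k, ![a, b] ∈ W → ![a, 0] ∈ W := by
      intro a b h
      have := hW (HeckeAlg.S1 k 0) _ h
      rw [hS, SM2_apply] at this
      simpa using W.neg_mem this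
    refine stable_trivial k y hy W (fun x hx => hT ▸ hW _ x hx) hs ?_
    intro a b h
    simpa using W.sub_mem h (hs a b h)
  · intro W hW
    have hs : ∀ a b : k, ![a, b] ∈ W → ![0, b] ∈ W := by
      intro a b h
      have := hW (HeckeAlg.S1 k 0) _ h
      rw [hSt, SMt2_apply] at this
      simpa using W.neg_mem this
    refine stable_trivial k y hy W (fun x hx => hTt ▸ hW _ x hx) ?_ hs
    intro a b h
    have e : (![a, 0] : Fin 2 → k) = ![a, b] - ![0, b] := by
      ext i
      fin_cases i <;> simp
    rw [e]
    exact W.sub_mem h (hs a b h)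
  · rintro ⟨g, hg⟩
    have a1 := hg (HeckeAlg.S1 k 0) ![0, 1]
    have a2 := hg (HeckeAlg.S1 k 0) ![1, 0]
    have a3 := hg (HeckeAlg.T k 0) ![1, 0]
    rw [hS, hSt, SM2_apply, vec2_eta k (g ![0, 1]), SMt2_apply] at a1
    rw [hS, hSt, SM2_apply, vec2_eta k (g ![1, 0]), SMt2_apply] at a2
    rw [hT, hTt, Tmat2_apply, vec2_eta k (g ![1, 0]), Tmat2_apply] at a3
    have z : (![-0, 0] : Fin 2 → k) = 0 := by simp
    have n : (![-1, 0] : Fin 2 → k) = -![1, 0] := by simp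
    have m : (![-(y : k) ^ 2 * 0, 1 - (y : k) * 0] : Fin 2 → k) = ![0, 1] := by simp
    rw [z, map_zero] at a1
    rw [n, map_neg] at a2
    rw [m] at a3
    have b1 : g ![0, 1] 1 = 0 := by simpa using (congrFun a1 1).symm
    have b2 : g ![1, 0] 0 = 0 := by simpa using congrFun a2 0
    have b3 := congrFun a3 1
    simp [b1, b2, hy] at b3
    have : g ![1, 0] = 0 := by
      rw [vec2_eta k (g ![1, 0]), b2, b3]
      simp
    rw [LinearEquiv.map_eq_zero_iff] at this
    simpa using congrFun this 0
end
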